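/- Let d ∈ ℕ, 0 < p ≤ ∞, f ∈ L¹([0,1]^d), and let S ⊂ ℕ₀^d be a finite set. Set g := f ∘ φ, let ĝ(m̄) := ∫_{[0,1]^d} g(y) e^{-2πi m̄·y} dy denote the Fourier coefficients of g viewed as a 1-periodic function, and let |m̄| := (|m₁|,…,|m_d|). Then ‖ f - Σ_{k̄ ∈ S} (∫_{[0,1]^d} f c_{k̄}) c_{k̄} ‖_{L_p([0,1]^d)} = ‖ g - Σ_{m̄ ∈ ℤ^d, |m̄| ∈ S} ĝ(m̄) e^{2πi m̄·(·)} ‖_{L_p([0,1]^d)}; that is, the L_p error of half-period cosine approximation of f equals the L_p error of the corresponding Fourier approximation of the tent-transformed function f ∘ φ. -/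

import Mathlib

/-!
The tent transform `φ` preserves Lebesgue measure on the cube, so the left-hand error may be
composed with `φ`, and it suffices to show that the two approximants agree pointwise: for each
`k`, the part of the Fourier series of `f ∘ φ` with `|m| = k` equals `c_k ∘ φ` times the `k`-th
cosine coefficient of `f`. That part of the Fourier series is integration of `f ∘ φ` against
`∏ i, K (k i) (x i - y i)`, where `K k` is the sum of the characters of frequency `±k`. Since
`f ∘ φ` is invariant under every reflection `y i ↦ 1 - y i`, each factor may be averaged over
the reflection, and `cos (a - b) + cos (a + b) = 2 cos a cos b` turns the average into
`c_{k i} (φ (x i)) * c_{k i} (φ (y i))`.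
-/

open MeasureTheory Set
open scoped ENNReal

/-- Univariate half-period cosine functions: `c₀ ≡ 1`, `c_k(x) = √2 cos(πkx)` for `k ≥ 1`. -/
noncomputable def hpcFun (k : ℕ) (x : ℝ) : ℝ :=
  if k = 0 then 1 else Real.sqrt 2 * Real.cos (Real.pi * (k : ℝ) * x)

/-- Tensorized half-period cosine functions `c_k̄`. -/
noncomputable def hpc (d : ℕ) (k : Fin d → ℕ) (x : Fin d → ℝ) : ℝ :=
  ∏ i, hpcFun (k i) (x i)

/-- The tent transform `φ(x)ᵢ = 1 - |2xᵢ - 1|`. -/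
def tent (d : ℕ) (x : Fin d → ℝ) : Fin d → ℝ :=
  fun i => 1 - |2 * x i - 1|

theorem integral_comp_of_measurePreserving {X Y F : Type*} [MeasurableSpace X]
    [MeasurableSpace Y] [NormedAddCommGroup F] [NormedSpace ℝ F] {μ : Measure X} {ν : Measure Y}
    {φ : X → Y} (hφ : MeasurePreserving φ μ ν) {f : Y → F} (hf : AEStronglyMeasurable f ν) :
    ∫ x, f (φ x) ∂μ = ∫ y, f y ∂ν := by
  rw [← hφ.map_eq] at hf ⊢
  exact (integral_map hφ.aemeasurable hf).symm

theorem prod_add_comp_eq_sum_prod_piecewise {ι R : Type*} [Fintype ι] [DecidableEq ι]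
    [CommSemiring R] {α : ι → Type*} (u : ∀ i, α i → R) (σ : ∀ i, α i → α i) (y : ∀ i, α i) :
    ∏ i, (u i (y i) + u i (σ i (y i))) =
      ∑ s : Finset ι, ∏ i, u i (s.piecewise (fun i => σ i (y i)) y i) := by
  simp_rw [add_comm (u _ (y _)), Fintype.prod_add]
  refine Finset.sum_congr rfl fun s _ => ?_
  rw [← Finset.prod_mul_prod_compl s]
  congr 1 <;> refine Finset.prod_congr rfl fun i hi => ?_
  · rw [Finset.piecewise_eq_of_mem _ _ _ hi]
  · rw [Finset.piecewise_eq_of_notMem _ _ _ (Finset.mem_compl.1 hi)]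

section Symmetrization

variable {ι 𝕜 E : Type*} [Fintype ι] [DecidableEq ι] [RCLike 𝕜] [NormedAddCommGroup E]
  [NormedSpace 𝕜 E] [NormedSpace ℝ E] {α : ι → Type*} [∀ i, MeasurableSpace (α i)]
  {μ : ∀ i, Measure (α i)} [∀ i, SigmaFinite (μ i)] {σ : ∀ i, α i → α i}

theorem measurePreserving_piecewise (hσ : ∀ i, MeasurePreserving (σ i) (μ i) (μ i))
    (s : Finset ι) :
    MeasurePreserving (fun y : ∀ i, α i => s.piecewise (fun i => σ i (y i)) y)
      (Measure.pi μ) (Measure.pi μ) := by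
  refine measurePreserving_pi μ μ (f := fun i t => if i ∈ s then σ i t else t) fun i => ?_
  by_cases hi : i ∈ s
  · simpa only [hi, if_true] using hσ i
  · simp only [hi, if_false]
    exact MeasurePreserving.id (μ i)

theorem integral_prod_smul_eq_integral_prod_average_smul
    (hσ : ∀ i, MeasurePreserving (σ i) (μ i) (μ i)) {g : (∀ i, α i) → E}
    (hg : ∀ (s : Finset ι) y, g (s.piecewise (fun i => σ i (y i)) y) = g y)
    {u : ∀ i, α i → 𝕜} (hu : Integrable (fun y => (∏ i, u i (y i)) • g y) (Measure.pi μ)) :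
    ∫ y, (∏ i, u i (y i)) • g y ∂Measure.pi μ =
      ∫ y, (∏ i, (u i (y i) + u i (σ i (y i))) / 2) • g y ∂Measure.pi μ := by
  set F : (∀ i, α i) → E := fun y => (∏ i, u i (y i)) • g y with hF
  have average_eq_sum : ∀ y, (∏ i, (u i (y i) + u i (σ i (y i))) / 2) • g y =
      ((2 : 𝕜) ^ Fintype.card ι)⁻¹ •
        ∑ s : Finset ι, F (s.piecewise (fun i => σ i (y i)) y) := by
    intro y
    simp only [hF, hg, ← Finset.sum_smul, smul_smul, ← prod_add_comp_eq_sum_prod_piecewise]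
    rw [Finset.prod_div_distrib, Finset.prod_const, Finset.card_univ, div_eq_inv_mul]
  have integrable_piecewise (s : Finset ι) :
      Integrable (fun y => F (s.piecewise (fun i => σ i (y i)) y)) (Measure.pi μ) :=
    (measurePreserving_piecewise hσ s).integrable_comp_of_integrable hu
  have integral_piecewise (s : Finset ι) :
      ∫ y, F (s.piecewise (fun i => σ i (y i)) y) ∂Measure.pi μ = ∫ y, F y ∂Measure.pi μ :=
    integral_comp_of_measurePreserving (measurePreserving_piecewise hσ s) hu.aestronglyMeasurable
  simp_rw [average_eq_sum]
  rw [integral_smul, integral_finsetSum _ fun s _ => integrable_piecewise s]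
  simp only [integral_piecewise, Finset.sum_const, Finset.card_univ, Fintype.card_finset]
  rw [← Nat.cast_smul_eq_nsmul 𝕜, Nat.cast_pow, Nat.cast_ofNat,
    inv_smul_smul₀ (pow_ne_zero _ two_ne_zero)]

end Symmetrization

section Tent

/-- The univariate tent map; `tent d` applies it to each coordinate. -/
def tentMap (x : ℝ) : ℝ := 1 - |2 * x - 1|

theorem tentMap_one_sub (x : ℝ) : tentMap (1 - x) = tentMap x := by
  rw [tentMap, tentMap, ← abs_neg]
  ring_nf

theorem tent_piecewise_one_sub {d : ℕ} (s : Finset (Fin d)) (y : Fin d → ℝ) :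
    tent d (s.piecewise (fun i => 1 - y i) y) = tent d y := by
  ext i
  change tentMap _ = tentMap _
  by_cases hi : i ∈ s
  · rw [Finset.piecewise_eq_of_mem _ _ _ hi, tentMap_one_sub]
  · rw [Finset.piecewise_eq_of_notMem _ _ _ hi]

theorem preimage_tentMap_Ici (a : ℝ) : tentMap ⁻¹' Ici a = Icc (a / 2) (1 - a / 2) := by
  ext x
  simp only [tentMap, mem_preimage, mem_Ici, mem_Icc, le_sub_comm (a := a), abs_le]
  constructor <;> rintro ⟨hl, hr⟩ <;> constructor <;> linarith

theorem measurePreserving_tentMap :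
    MeasurePreserving tentMap (volume.restrict (Icc 0 1)) (volume.restrict (Icc 0 1)) := by
  have measurable_tentMap : Measurable tentMap := by unfold tentMap; fun_prop
  have Ici_inter_unitInterval (a : ℝ) : Ici a ∩ Icc 0 1 = Icc (max a 0) 1 := by
    rw [← Ici_inter_Iic, ← inter_assoc, Ici_inter_Ici, Ici_inter_Iic]
  refine ⟨measurable_tentMap, Measure.ext_of_Ici _ _ fun a => ?_⟩
  rw [Measure.map_apply measurable_tentMap measurableSet_Ici,
    Measure.restrict_apply (measurable_tentMap measurableSet_Ici),
    Measure.restrict_apply measurableSet_Ici, preimage_tentMap_Ici, Icc_inter_Icc,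
    Ici_inter_unitInterval, Real.volume_Icc, Real.volume_Icc]
  congr 1
  rcases le_total a 0 with ha | ha
  · rw [max_eq_right ha, max_eq_right (by linarith), min_eq_right (by linarith)]
  · rw [max_eq_left ha, max_eq_left (by linarith), min_eq_left (by linarith)]
    ring

theorem measurePreserving_add_sub_restrict_Icc (a b : ℝ) :
    MeasurePreserving (fun x => a + b - x) (volume.restrict (Icc a b))
      (volume.restrict (Icc a b)) := by
  simpa using (Measure.measurePreserving_sub_left (volume : Measure ℝ) (a + b)).restrict_preimage
    (measurableSet_Icc (a := a) (b := b))

theorem volume_restrict_Icc_eq_pi {ι : Type*} [Fintype ι] (a b : ι → ℝ) :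
    (volume : Measure (ι → ℝ)).restrict (Icc a b) =
      Measure.pi fun i => volume.restrict (Icc (a i) (b i)) := by
  rw [← Measure.restrict_pi_pi, pi_univ_Icc, volume_pi]

theorem measurePreserving_tent (d : ℕ) :
    MeasurePreserving (tent d) (volume.restrict (Icc 0 1)) (volume.restrict (Icc 0 1)) := by
  rw [volume_restrict_Icc_eq_pi]
  exact measurePreserving_pi _ _ fun _ => measurePreserving_tentMap

theorem integrableOn_comp_tent {E : Type*} [NormedAddCommGroup E] {d : ℕ}
    {f : (Fin d → ℝ) → E} (hf : IntegrableOn f (Icc 0 1)) :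
    IntegrableOn (fun y => f (tent d y)) (Icc 0 1) :=
  (measurePreserving_tent d).integrable_comp_of_integrable hf

end Tent

section Frequencies

variable {ι : Type*} [Fintype ι] [DecidableEq ι]

/-- The set of all `m : ι → ℤ` with `|m| = k` coordinatewise. It is a product of the pairs
`{k i, -k i}`, which are singletons where `k i = 0`. -/
def natAbsFiber (k : ι → ℕ) : Finset (ι → ℤ) :=
  Fintype.piFinset fun i => {(k i : ℤ), -(k i : ℤ)}

theorem mem_natAbsFiber {k : ι → ℕ} {m : ι → ℤ} :
    m ∈ natAbsFiber k ↔ (fun i => (m i).natAbs) = k := by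
  simp only [natAbsFiber, Fintype.mem_piFinset, Finset.mem_insert, Finset.mem_singleton,
    funext_iff, Int.natAbs_eq_iff]

theorem tsum_ite_natAbs_mem {M : Type*} [AddCommMonoid M] [TopologicalSpace M]
    (S : Finset (ι → ℕ)) (F : (ι → ℤ) → M) :
    ∑' m, (if (fun i => (m i).natAbs) ∈ S then F m else 0) =
      ∑ k ∈ S, ∑ m ∈ natAbsFiber k, F m := by
  have mem_biUnion (m : ι → ℤ) :
      m ∈ S.biUnion natAbsFiber ↔ (fun i => (m i).natAbs) ∈ S := by
    simp [mem_natAbsFiber]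
  have pairwiseDisjoint : (S : Set (ι → ℕ)).PairwiseDisjoint natAbsFiber := by
    refine fun k _ l _ hkl => Finset.disjoint_left.2 fun m hk hl => hkl ?_
    exact (mem_natAbsFiber.1 hk).symm.trans (mem_natAbsFiber.1 hl)
  rw [tsum_eq_sum fun m hm => if_neg (mt (mem_biUnion m).2 hm),
    ← Finset.sum_biUnion pairwiseDisjoint]
  exact Finset.sum_congr rfl fun m hm => if_pos ((mem_biUnion m).1 hm)

/-- The sum of the characters `t ↦ exp (2πimt)` over the integers `m` with `|m| = k`. -/
noncomputable def frequencyKernel (k : ℕ) (t : ℝ) : ℂ :=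
  ∑ m ∈ ({(k : ℤ), -(k : ℤ)} : Finset ℤ), Complex.exp (2 * Real.pi * Complex.I * (m * t))

theorem continuous_frequencyKernel (k : ℕ) : Continuous (frequencyKernel k) := by
  unfold frequencyKernel
  fun_prop

theorem frequencyKernel_zero (t : ℝ) : frequencyKernel 0 t = 1 := by
  simp [frequencyKernel]

theorem frequencyKernel_of_ne_zero {k : ℕ} (hk : k ≠ 0) (t : ℝ) :
    frequencyKernel k t = (2 * Real.cos (2 * Real.pi * k * t) : ℝ) := by
  rw [frequencyKernel, Finset.sum_pair (by omega)]
  push_cast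
  rw [Complex.two_cos]
  congr 2 <;> ring

theorem sum_natAbsFiber_exp (k : ι → ℕ) (t : ι → ℝ) :
    ∑ m ∈ natAbsFiber k, Complex.exp (2 * Real.pi * Complex.I * ∑ i, (m i : ℂ) * (t i : ℂ)) =
      ∏ i, frequencyKernel (k i) (t i) := by
  simp only [frequencyKernel, Finset.prod_univ_sum, natAbsFiber, Finset.mul_sum, Complex.exp_sum]

end Frequencies

section FourierBlock

variable {ι E : Type*} [Fintype ι] [NormedAddCommGroup E] [NormedSpace ℂ E]

/-- The Fourier coefficient `ĝ(m)` of `g`, viewed as a 1-periodic function on the unit cube. -/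
noncomputable def cubeFourierCoeff (g : (ι → ℝ) → E) (m : ι → ℤ) : E :=
  ∫ y in Icc (0 : ι → ℝ) 1,
    Complex.exp (-(2 * (Real.pi : ℂ) * Complex.I) * ∑ i, (m i : ℂ) * (y i : ℂ)) • g y

theorem sum_natAbsFiber_exp_smul_cubeFourierCoeff [DecidableEq ι] {g : (ι → ℝ) → E}
    (hg : IntegrableOn g (Icc 0 1)) (k : ι → ℕ) (x : ι → ℝ) :
    ∑ m ∈ natAbsFiber k, Complex.exp (2 * (Real.pi : ℂ) * Complex.I *
        ∑ i, (m i : ℂ) * (x i : ℂ)) • cubeFourierCoeff g m =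
      ∫ y in Icc (0 : ι → ℝ) 1, (∏ i, frequencyKernel (k i) (x i - y i)) • g y := by
  simp only [cubeFourierCoeff, ← integral_smul]
  rw [← integral_finsetSum]
  · congr with y
    rw [← sum_natAbsFiber_exp, Finset.sum_smul]
    refine Finset.sum_congr rfl fun m _ => ?_
    rw [smul_smul, ← Complex.exp_add]
    simp only [Complex.ofReal_sub, mul_sub, Finset.sum_sub_distrib]
    ring_nf
  · intro m _
    exact (hg.continuousOn_smul (Continuous.continuousOn (by fun_prop)) isCompact_Icc).smul _

end FourierBlock

section HalfPeriodCosine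

theorem hpcFun_tentMap (k : ℕ) (x : ℝ) : hpcFun k (tentMap x) = hpcFun k (2 * x) := by
  have cos_tentMap :
      Real.cos (Real.pi * k * tentMap x) = Real.cos (Real.pi * k * (2 * x)) := by
    unfold tentMap
    rcases abs_choice (2 * x - 1) with h | h <;> rw [h]
    · rw [← Real.cos_nat_mul_two_pi_sub _ k]
      ring_nf
    · ring_nf
  rw [hpcFun, hpcFun, cos_tentMap]

theorem frequencyKernel_average_eq_hpcFun_mul (k : ℕ) (x y : ℝ) :
    (frequencyKernel k (x - y) + frequencyKernel k (x - (1 - y))) / 2 =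
      (hpcFun k (tentMap x) * hpcFun k (tentMap y) : ℝ) := by
  rw [hpcFun_tentMap, hpcFun_tentMap]
  rcases eq_or_ne k 0 with rfl | hk
  · simp [frequencyKernel_zero, hpcFun]
  have cos_reflect : Real.cos (2 * Real.pi * k * (x - (1 - y))) =
      Real.cos (2 * Real.pi * k * x + 2 * Real.pi * k * y) := by
    rw [← Real.cos_sub_nat_mul_two_pi (_ + _) k]
    ring_nf
  rw [frequencyKernel_of_ne_zero hk, frequencyKernel_of_ne_zero hk, cos_reflect, mul_sub,
    Real.cos_sub, Real.cos_add, hpcFun, hpcFun, if_neg hk, if_neg hk, mul_mul_mul_comm,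
    Real.mul_self_sqrt zero_le_two]
  push_cast
  ring_nf

theorem prod_frequencyKernel_average_eq_hpc_mul {d : ℕ} (k : Fin d → ℕ) (x y : Fin d → ℝ) :
    ∏ i, (frequencyKernel (k i) (x i - y i) + frequencyKernel (k i) (x i - (1 - y i))) / 2 =
      (hpc d k (tent d x) : ℂ) * (hpc d k (tent d y) : ℂ) := by
  simp only [frequencyKernel_average_eq_hpcFun_mul, hpc, Complex.ofReal_prod,
    ← Finset.prod_mul_distrib, ← Complex.ofReal_mul]
  rfl

theorem continuous_hpcFun (k : ℕ) : Continuous (hpcFun k) := by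
  unfold hpcFun
  split_ifs <;> fun_prop

theorem continuous_hpc {d : ℕ} (k : Fin d → ℕ) : Continuous (hpc d k) :=
  continuous_finsetProd _ fun i _ => (continuous_hpcFun (k i)).comp (continuous_apply i)

variable {E : Type*} [NormedAddCommGroup E] [NormedSpace ℂ E] {d : ℕ} {f : (Fin d → ℝ) → E}

/-- The half-period cosine coefficient of `f` with index `k`. -/
noncomputable def hpcCoeff (f : (Fin d → ℝ) → E) (k : Fin d → ℕ) : E :=
  ∫ y in Icc (0 : Fin d → ℝ) 1, (hpc d k y : ℂ) • f y

theorem integral_hpc_tent_smul (hf : IntegrableOn f (Icc 0 1)) (k : Fin d → ℕ) :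
    ∫ y in Icc (0 : Fin d → ℝ) 1, (hpc d k (tent d y) : ℂ) • f (tent d y) = hpcCoeff f k := by
  have continuous_hpc_ofReal : Continuous fun y => (hpc d k y : ℂ) :=
    Complex.continuous_ofReal.comp (continuous_hpc k)
  exact integral_comp_of_measurePreserving (f := fun y => (hpc d k y : ℂ) • f y)
    (measurePreserving_tent d)
    (continuous_hpc_ofReal.aestronglyMeasurable.smul hf.aestronglyMeasurable)

theorem integral_prod_frequencyKernel_smul_comp_tent (hf : IntegrableOn f (Icc 0 1))
    (k : Fin d → ℕ) (x : Fin d → ℝ) :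
    ∫ y in Icc (0 : Fin d → ℝ) 1, (∏ i, frequencyKernel (k i) (x i - y i)) • f (tent d y) =
      (hpc d k (tent d x) : ℂ) • hpcCoeff f k := by
  have continuous_kernel :
      Continuous fun y : Fin d → ℝ => ∏ i, frequencyKernel (k i) (x i - y i) :=
    continuous_finsetProd _ fun i _ => (continuous_frequencyKernel (k i)).comp (by fun_prop)
  have integrable_kernel_smul : IntegrableOn
      (fun y => (∏ i, frequencyKernel (k i) (x i - y i)) • f (tent d y)) (Icc 0 1) :=
    (integrableOn_comp_tent hf).continuousOn_smul continuous_kernel.continuousOn isCompact_Icc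
  have measurePreserving_one_sub : MeasurePreserving (fun t : ℝ => 1 - t)
      (volume.restrict (Icc 0 1)) (volume.restrict (Icc 0 1)) := by
    simpa only [zero_add] using measurePreserving_add_sub_restrict_Icc 0 1
  have cube_eq_pi : (volume : Measure (Fin d → ℝ)).restrict (Icc 0 1) =
      Measure.pi fun _ => volume.restrict (Icc 0 1) := volume_restrict_Icc_eq_pi 0 1
  rw [IntegrableOn, cube_eq_pi] at integrable_kernel_smul
  rw [← integral_hpc_tent_smul hf, ← integral_smul, cube_eq_pi,
    integral_prod_smul_eq_integral_prod_average_smul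
    (u := fun i t => frequencyKernel (k i) (x i - t)) (g := fun y => f (tent d y))
    (fun _ => measurePreserving_one_sub) (fun s y => by rw [tent_piecewise_one_sub])
    integrable_kernel_smul]
  simp only [prod_frequencyKernel_average_eq_hpc_mul, smul_smul]

theorem tsum_exp_smul_cubeFourierCoeff_comp_tent (hf : IntegrableOn f (Icc 0 1))
    (S : Finset (Fin d → ℕ)) (x : Fin d → ℝ) :
    ∑' m : Fin d → ℤ, (if (fun i => (m i).natAbs) ∈ S then
        Complex.exp (2 * (Real.pi : ℂ) * Complex.I * ∑ i, (m i : ℂ) * (x i : ℂ)) •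
          cubeFourierCoeff (fun y => f (tent d y)) m
      else 0) =
      ∑ k ∈ S, (hpc d k (tent d x) : ℂ) • hpcCoeff f k := by
  rw [tsum_ite_natAbs_mem]
  refine Finset.sum_congr rfl fun k _ => ?_
  rw [sum_natAbsFiber_exp_smul_cubeFourierCoeff (integrableOn_comp_tent hf),
    integral_prod_frequencyKernel_smul_comp_tent hf]

end HalfPeriodCosine

theorem statement12_general {E : Type*} [NormedAddCommGroup E] [NormedSpace ℂ E]
    [CompleteSpace E] {d : ℕ} {p : ℝ≥0∞} (_hp : 0 < p) {f : (Fin d → ℝ) → E}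
    (hf : IntegrableOn f (Icc 0 1)) (S : Finset (Fin d → ℕ)) :
    eLpNorm (fun x => f x - ∑ k ∈ S, (hpc d k x : ℂ) • hpcCoeff f k)
      p (volume.restrict (Icc (0 : Fin d → ℝ) 1)) =
    eLpNorm (fun x => f (tent d x) - ∑' m : Fin d → ℤ,
        if (fun i => (m i).natAbs) ∈ S then
          Complex.exp (2 * (Real.pi : ℂ) * Complex.I * ∑ i, (m i : ℂ) * (x i : ℂ)) •
            cubeFourierCoeff (fun y => f (tent d y)) m
        else 0)
      p (volume.restrict (Icc (0 : Fin d → ℝ) 1)) := by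
  have continuous_cosineSum : Continuous fun x => ∑ k ∈ S, (hpc d k x : ℂ) • hpcCoeff f k :=
    continuous_finsetSum _ fun k _ =>
      (Complex.continuous_ofReal.comp (continuous_hpc k)).smul continuous_const
  simp only [tsum_exp_smul_cubeFourierCoeff_comp_tent hf S]
  exact (eLpNorm_comp_measurePreserving
    (hf.aestronglyMeasurable.sub continuous_cosineSum.aestronglyMeasurable)
    (measurePreserving_tent d)).symm

/-- The `L_p` error of half-period cosine approximation of `f` (with coefficient
selection `S`) equals the `L_p` error of the corresponding Fourier approximation of
the tent-transformed function `g = f ∘ φ`. -/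
theorem statement12 (d : ℕ) (p : ℝ≥0∞) (hp : 0 < p)
    (f : (Fin d → ℝ) → ℂ) (hf : IntegrableOn f (Icc 0 1))
    (S : Finset (Fin d → ℕ)) :
    eLpNorm (fun x : Fin d → ℝ =>
        f x - ∑ k ∈ S,
          (∫ y in Icc (0 : Fin d → ℝ) 1, f y * (hpc d k y : ℂ)) * (hpc d k x : ℂ))
      p (volume.restrict (Icc (0 : Fin d → ℝ) 1)) =
    eLpNorm (fun x : Fin d → ℝ =>
        f (tent d x) - ∑' m : Fin d → ℤ,
          if (fun i => (m i).natAbs) ∈ S then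
            (∫ y in Icc (0 : Fin d → ℝ) 1,
                f (tent d y) *
                  Complex.exp (-(2 * (Real.pi : ℂ) * Complex.I) * ∑ i, (m i : ℂ) * (y i : ℂ))) *
              Complex.exp ((2 * (Real.pi : ℂ) * Complex.I) * ∑ i, (m i : ℂ) * (x i : ℂ))
          else 0)
      p (volume.restrict (Icc (0 : Fin d → ℝ) 1)) := by
  simpa only [cubeFourierCoeff, hpcCoeff, smul_eq_mul, mul_comm] using statement12_general hp hf S
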